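/- For 0 ≤ j ≤ k, let CG^{[k,k,j],⋆} : V_k(C) ⊗ V_k(C) → V_{2k−2j}(C) be the transpose of the Clebsch–Gordan inclusion, and let ∇ = ∂²/(∂X∂Ȳ) − ∂²/(∂Y∂X̄) act on polynomials in X,Y,X̄,Ȳ. Then for every δ ∈ V_k ⊗ V_k (viewed as a polynomial bihomogeneous of degree k in (X,Y) and in (X̄,Ȳ)), CG^{[k,k,j],⋆}(δ) = (−1)^j j! · (1/(j!)²) ∇^j(δ) |_{X̄=X, Ȳ=Y}. In particular, the two natural SL₂-equivariant projections V_k ⊗ V_k → V_{2k−2j} differ by the scalar (−1)^j j!. -/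

import Mathlib

open MvPolynomial

/-- The operator `∇ = ∂²/(∂X∂Ȳ) − ∂²/(∂Y∂X̄)` on polynomials in `X,Y,X̄,Ȳ`
(variables `0,1,2,3`). -/
noncomputable def asaiNabla : Module.End ℂ (MvPolynomial (Fin 4) ℂ) :=
  ((pderiv (0 : Fin 4) : Derivation ℂ (MvPolynomial (Fin 4) ℂ) (MvPolynomial (Fin 4) ℂ)).toLinearMap ∘ₗ
    (pderiv (3 : Fin 4)).toLinearMap) -
  ((pderiv (1 : Fin 4)).toLinearMap ∘ₗ (pderiv (2 : Fin 4)).toLinearMap)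

/-- Substitution `X̄ := X`, `Ȳ := Y`. -/
noncomputable def asaiSubXY : MvPolynomial (Fin 4) ℂ →ₐ[ℂ] MvPolynomial (Fin 2) ℂ :=
  aeval ![X 0, X 1, X 0, X 1]

/-- The right `GL₂`-action `(f∣M)(X,Y) = f(aX+bY, cX+dY)` on two-variable polynomials. -/
noncomputable def asaiAct2 (M : Matrix (Fin 2) (Fin 2) ℂ) :
    MvPolynomial (Fin 2) ℂ →ₐ[ℂ] MvPolynomial (Fin 2) ℂ :=
  aeval ![C (M 0 0) * X 0 + C (M 0 1) * X 1, C (M 1 0) * X 0 + C (M 1 1) * X 1]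

/-- The diagonal right action on polynomials in `X,Y,X̄,Ȳ`. -/
noncomputable def asaiAct4 (M : Matrix (Fin 2) (Fin 2) ℂ) :
    MvPolynomial (Fin 4) ℂ →ₐ[ℂ] MvPolynomial (Fin 4) ℂ :=
  aeval ![C (M 0 0) * X 0 + C (M 0 1) * X 1, C (M 1 0) * X 0 + C (M 1 1) * X 1,
          C (M 0 0) * X 2 + C (M 0 1) * X 3, C (M 1 0) * X 2 + C (M 1 1) * X 3]

noncomputable def asaiE (k a b : ℕ) : MvPolynomial (Fin 4) ℂ :=
  X 0 ^ a * X 1 ^ (k - a) * X 2 ^ b * X 3 ^ (k - b)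

lemma asai_expand_u (k a b : ℕ) (ha : a ≤ k) (hb : b ≤ k) :
    asaiAct4 !![1, 1; 0, 1] (asaiE k a b) =
      ∑ i ∈ Finset.range (a + 1), ∑ l ∈ Finset.range (b + 1),
        ((a.choose i : ℂ) * (b.choose l : ℂ)) • asaiE k i l := by
  have h1 : asaiAct4 !![1, 1; 0, 1] (asaiE k a b) =
      ((X 0 + X 1) ^ a * X 1 ^ (k - a)) * ((X 2 + X 3) ^ b * X 3 ^ (k - b)) := by
    simp [asaiAct4, asaiE]; ring
  rw [h1, add_pow, add_pow, Finset.sum_mul, Finset.sum_mul]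
  simp only [Finset.sum_mul, Finset.mul_sum]
  refine Finset.sum_congr rfl fun i hi => Finset.sum_congr rfl fun l hl => ?_
  simp only [Finset.mem_range] at hi hl
  have e1 : k - i = (a - i) + (k - a) := by omega
  have e2 : k - l = (b - l) + (k - b) := by omega
  simp only [asaiE, e1, e2, pow_add, smul_eq_C_mul, map_mul, map_natCast]
  ring

lemma asai_expand_v (k a b : ℕ) :
    asaiAct4 !![1, 0; 1, 1] (asaiE k a b) =
      ∑ i ∈ Finset.range (k - a + 1), ∑ l ∈ Finset.range (k - b + 1),
        (((k - a).choose i : ℂ) * ((k - b).choose l : ℂ)) • asaiE k (a + i) (b + l) := by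
  have h1 : asaiAct4 !![1, 0; 1, 1] (asaiE k a b) =
      ((X 0 + X 1) ^ (k - a) * X 0 ^ a) * ((X 2 + X 3) ^ (k - b) * X 2 ^ b) := by
    simp [asaiAct4, asaiE]; ring
  rw [h1, add_pow, add_pow, Finset.sum_mul, Finset.sum_mul]
  simp only [Finset.sum_mul, Finset.mul_sum]
  refine Finset.sum_congr rfl fun i hi => Finset.sum_congr rfl fun l hl => ?_
  simp only [asaiE, ← Nat.sub_sub, pow_add, smul_eq_C_mul, map_mul, map_natCast]
  ring

lemma asai_coeff_torus (t s : ℂ) (p : MvPolynomial (Fin 2) ℂ) (d : Fin 2 →₀ ℕ) :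
    coeff d (asaiAct2 !![t, 0; 0, s] p) = t ^ (d 0) * s ^ (d 1) * coeff d p := by
  induction p using MvPolynomial.induction_on' with
  | monomial u a =>
    have : asaiAct2 !![t, 0; 0, s] (monomial u a) =
        monomial u (t ^ (u 0) * s ^ (u 1) * a) := by
      rw [asaiAct2, aeval_monomial, monomial_eq, Finsupp.prod_fintype _ _ (by simp),
        Finsupp.prod_fintype _ _ (by simp)]
      simp [Fin.prod_univ_two, mul_pow]
      ring
    rw [this, coeff_monomial, coeff_monomial]
    split_ifs with h
    · rw [h]
    · simp
  | add p q hp hq => rw [map_add, coeff_add, coeff_add, hp, hq]; ring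

lemma asai_torus_e (t s : ℂ) (k a b : ℕ) :
    asaiAct4 !![t, 0; 0, s] (asaiE k a b) =
      (t ^ (a + b) * s ^ ((k - a) + (k - b))) • asaiE k a b := by
  simp [asaiAct4, asaiE, smul_eq_C_mul, mul_pow, pow_add]
  ring

lemma asai_unique (k j : ℕ) (hj : j ≤ k)
    (D : MvPolynomial (Fin 4) ℂ →ₗ[ℂ] MvPolynomial (Fin 2) ℂ)
    (hdeg : ∀ a b, a ≤ k → b ≤ k →
      ∀ d ∈ (D (asaiE k a b)).support, d 0 + d 1 = 2 * k - 2 * j)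
    (hequiv : ∀ M : Matrix (Fin 2) (Fin 2) ℂ, M.det = 1 → ∀ a b, a ≤ k → b ≤ k →
        D (asaiAct4 M (asaiE k a b)) = asaiAct2 M (D (asaiE k a b)))
    (hnorm : coeff (Finsupp.single 1 (2 * k - 2 * j)) (D (asaiE k 0 j)) = 0) :
    ∀ a b, a ≤ k → b ≤ k → D (asaiE k a b) = 0 := by
  -- weights
  have hw : ∀ a b, a ≤ k → b ≤ k → ∀ d, coeff d (D (asaiE k a b)) ≠ 0 →
      d 0 + j = a + b ∧ d 0 + d 1 = 2 * k - 2 * j := by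
    intro a b ha hb d hd
    have h1 := hdeg a b ha hb d (mem_support_iff.2 hd)
    refine ⟨?_, h1⟩
    have h2 := hequiv !![2, 0; 0, 2⁻¹] (by simp [Matrix.det_fin_two]) a b ha hb
    have h3 := congrArg (coeff d) h2
    rw [asai_torus_e, map_smul, coeff_smul, asai_coeff_torus, smul_eq_mul] at h3
    have h4 := mul_right_cancel₀ hd h3
    have h5 : (2 : ℂ) ^ (a + b + d 1) = 2 ^ (d 0 + ((k - a) + (k - b))) := by
      rw [pow_add 2 (a + b), pow_add 2 (d 0)]
      rw [inv_pow, inv_pow] at h4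
      have t1 : (2 : ℂ) ^ (d 1) ≠ 0 := pow_ne_zero _ two_ne_zero
      have t2 : (2 : ℂ) ^ ((k - a) + (k - b)) ≠ 0 := pow_ne_zero _ two_ne_zero
      field_simp at h4
      linear_combination h4
    have h6 : a + b + d 1 = d 0 + ((k - a) + (k - b)) := by
      have : (2 : ℕ) ^ (a + b + d 1) = 2 ^ (d 0 + ((k - a) + (k - b))) := by exact_mod_cast h5
      exact Nat.pow_right_injective le_rfl this
    omega
  -- low weights vanish
  have hlow : ∀ a b, a ≤ k → b ≤ k → a + b < j → D (asaiE k a b) = 0 := by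
    intro a b ha hb hab
    ext d
    rw [coeff_zero]
    by_contra hd
    have := hw a b ha hb d hd
    omega
  have hzero : ∀ a b, a ≤ k → b ≤ k → a + b ≠ j →
      coeff (Finsupp.single 1 (2 * k - 2 * j)) (D (asaiE k a b)) = 0 := by
    intro a b ha hb hab
    by_contra hd
    have := (hw a b ha hb _ hd).1
    simp at this
    omega
  -- weight j, the coefficient
  have hjc : ∀ a b, a + b = j →
      coeff (Finsupp.single 1 (2 * k - 2 * j)) (D (asaiE k a b)) = 0 := by
    intro a
    induction a with
    | zero => intro b hb; obtain rfl : b = j := by omega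
              exact hnorm
    | succ a ih =>
      intro b hab
      have h1 := hequiv !![1, 0; 1, 1] (by simp [Matrix.det_fin_two]) a b (by omega) (by omega)
      rw [hlow a b (by omega) (by omega) (by omega), map_zero, asai_expand_v] at h1
      have h2 := congrArg (coeff (Finsupp.single 1 (2 * k - 2 * j))) h1
      simp only [map_sum, map_smul, coeff_sum, coeff_smul, coeff_zero, smul_eq_mul] at h2
      rw [Finset.sum_eq_single 1, Finset.sum_eq_single 0] at h2
      · simp only [Nat.choose_one_right, Nat.choose_zero_right, Nat.cast_one, mul_one,
          add_zero] at h2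
        refine (mul_eq_zero.1 h2).resolve_left ?_
        have : k - a ≠ 0 := by omega
        exact_mod_cast this
      · intro l hl hl0
        simp only [Finset.mem_range] at hl
        rw [hzero _ _ (by omega) (by omega) (by omega), mul_zero]
      · intro h; simp at h
      · intro i hi hi1
        refine Finset.sum_eq_zero fun l hl => ?_
        simp only [Finset.mem_range] at hl hi
        by_cases h : a + i + (b + l) = j
        · obtain rfl : i = 0 := by omega
          rw [add_zero, ih _ (by omega), mul_zero]
        · rw [hzero _ _ (by omega) (by omega) h, mul_zero]
      · intro h; simp at h; omega
  have hmain : ∀ n a b, a ≤ k → b ≤ k → a + b = n → D (asaiE k a b) = 0 := by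
    intro n
    induction n using Nat.strong_induction_on with
    | _ n ih =>
    intro a b ha hb hab
    rcases lt_trichotomy (a + b) j with h | h | h
    · exact hlow a b ha hb h
    · ext d
      rw [coeff_zero]
      by_contra hd
      obtain ⟨h1, h2⟩ := hw a b ha hb d hd
      have : d = Finsupp.single 1 (2 * k - 2 * j) := by
        ext i; fin_cases i
        · simp; omega
        · simp; omega
      rw [this] at hd
      exact hd (hjc a b h)
    · have h1 := hequiv !![1, 1; 0, 1] (by simp [Matrix.det_fin_two]) a b ha hb
      rw [asai_expand_u k a b ha hb] at h1
      simp only [map_sum, map_smul] at h1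
      rw [Finset.sum_eq_single a, Finset.sum_eq_single b] at h1
      · simp only [Nat.choose_self, Nat.cast_one, mul_one, one_smul] at h1
        obtain ⟨c, q, hc⟩ : ∃ (c : ℂ) (q : ℕ), D (asaiE k a b) =
            C c * X 0 ^ (a + b - j) * X 1 ^ q := by
          refine ⟨coeff (Finsupp.single 0 (a + b - j) +
            Finsupp.single 1 (2 * k - 2 * j - (a + b - j))) (D (asaiE k a b)),
            2 * k - 2 * j - (a + b - j), ?_⟩
          rw [X_pow_eq_monomial, X_pow_eq_monomial, mul_assoc, monomial_mul, C_mul_monomial]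
          ext d
          rw [coeff_monomial]
          split_ifs with hd
          · rw [hd, one_mul, mul_one]
          · by_contra hd'
            obtain ⟨h1, h2⟩ := hw a b ha hb d hd'
            apply hd
            ext i; fin_cases i
            · simp; omega
            · simp; omega
        rw [hc] at h1 ⊢
        have h2 := congrArg (eval ![0, 1]) h1
        have hne : a + b - j ≠ 0 := by omega
        simp [asaiAct2, hne] at h2
        simp [← h2]
      · intro l hl hl0
        simp only [Finset.mem_range] at hl
        rw [ih (a + l) (by omega) a l ha (by omega) rfl, smul_zero]
      · intro h; simp at h
      · intro i hi hi1
        refine Finset.sum_eq_zero fun l hl => ?_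
        simp only [Finset.mem_range] at hl hi
        rw [ih (i + l) (by omega) i l (by omega) (by omega) rfl, smul_zero]
      · intro h; simp at h
  exact fun a b ha hb => hmain _ a b ha hb rfl

lemma asai_pderiv_act (M : Matrix (Fin 2) (Fin 2) ℂ) (f : MvPolynomial (Fin 4) ℂ) :
    pderiv 0 (asaiAct4 M f) = C (M 0 0) * asaiAct4 M (pderiv 0 f)
      + C (M 1 0) * asaiAct4 M (pderiv 1 f) ∧
    pderiv 1 (asaiAct4 M f) = C (M 0 1) * asaiAct4 M (pderiv 0 f)
      + C (M 1 1) * asaiAct4 M (pderiv 1 f) ∧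
    pderiv 2 (asaiAct4 M f) = C (M 0 0) * asaiAct4 M (pderiv 2 f)
      + C (M 1 0) * asaiAct4 M (pderiv 3 f) ∧
    pderiv 3 (asaiAct4 M f) = C (M 0 1) * asaiAct4 M (pderiv 2 f)
      + C (M 1 1) * asaiAct4 M (pderiv 3 f) := by
  induction f using MvPolynomial.induction_on with
  | C a => simp [asaiAct4]
  | add p q hp hq =>
    obtain ⟨h0, h1, h2, h3⟩ := hp
    obtain ⟨g0, g1, g2, g3⟩ := hq
    simp only [map_add, h0, h1, h2, h3, g0, g1, g2, g3]
    refine ⟨?_, ?_, ?_, ?_⟩ <;> ring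
  | mul_X p n hp =>
    obtain ⟨h0, h1, h2, h3⟩ := hp
    have hX : asaiAct4 M (X n) = (![C (M 0 0) * X 0 + C (M 0 1) * X 1,
      C (M 1 0) * X 0 + C (M 1 1) * X 1, C (M 0 0) * X 2 + C (M 0 1) * X 3,
      C (M 1 0) * X 2 + C (M 1 1) * X 3] : Fin 4 → MvPolynomial (Fin 4) ℂ) n := by
      rw [asaiAct4, aeval_X]
    simp only [map_mul, Derivation.leibniz, map_add, smul_eq_mul, h0, h1, h2, h3, hX]
    fin_cases n <;> refine ⟨?_, ?_, ?_, ?_⟩ <;>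
      simp [pderiv_X] <;> ring

lemma asai_nabla_apply (f : MvPolynomial (Fin 4) ℂ) :
    asaiNabla f = pderiv 0 (pderiv 3 f) - pderiv 1 (pderiv 2 f) := rfl

lemma asai_nabla_act (M : Matrix (Fin 2) (Fin 2) ℂ) (hM : M.det = 1)
    (f : MvPolynomial (Fin 4) ℂ) :
    asaiNabla (asaiAct4 M f) = asaiAct4 M (asaiNabla f) := by
  have hd : (C (M 0 0) * C (M 1 1) - C (M 0 1) * C (M 1 0) : MvPolynomial (Fin 4) ℂ) = 1 := by
    rw [← C_mul, ← C_mul, ← C_sub, ← Matrix.det_fin_two, hM, C_1]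
  have c0 := fun g => (asai_pderiv_act M g).1
  have c1 := fun g => (asai_pderiv_act M g).2.1
  rw [asai_nabla_apply, asai_nabla_apply, (asai_pderiv_act M f).2.2.1,
    (asai_pderiv_act M f).2.2.2]
  simp only [map_add, map_sub, pderiv_C_mul, c0, c1]
  linear_combination (asaiAct4 M (pderiv 0 (pderiv 3 f)) -
    asaiAct4 M (pderiv 1 (pderiv 2 f))) * hd

lemma asai_nabla_pow_act (M : Matrix (Fin 2) (Fin 2) ℂ) (hM : M.det = 1) (j : ℕ)
    (f : MvPolynomial (Fin 4) ℂ) :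
    (asaiNabla ^ j) (asaiAct4 M f) = asaiAct4 M ((asaiNabla ^ j) f) := by
  induction j with
  | zero => simp
  | succ j ih => rw [pow_succ', Module.End.mul_apply, Module.End.mul_apply, ih,
      asai_nabla_act M hM]

lemma asai_sub_act (M : Matrix (Fin 2) (Fin 2) ℂ) (f : MvPolynomial (Fin 4) ℂ) :
    asaiSubXY (asaiAct4 M f) = asaiAct2 M (asaiSubXY f) := by
  have : asaiSubXY.comp (asaiAct4 M) = (asaiAct2 M).comp asaiSubXY := by
    apply MvPolynomial.algHom_ext
    intro i
    fin_cases i <;> simp [asaiSubXY, asaiAct4, asaiAct2]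
  exact DFunLike.congr_fun this f

lemma asai_nabla_pow_hom (n j : ℕ) (f : MvPolynomial (Fin 4) ℂ) (hf : f.IsHomogeneous n) :
    ((asaiNabla ^ j) f).IsHomogeneous (n - 2 * j) := by
  induction j with
  | zero => simpa using hf
  | succ j ih =>
    rw [pow_succ', Module.End.mul_apply, asai_nabla_apply]
    have e : n - 2 * (j + 1) = n - 2 * j - 1 - 1 := by omega
    rw [e]
    exact (ih.pderiv.pderiv).sub (ih.pderiv.pderiv)

lemma asai_sub_hom (n : ℕ) (f : MvPolynomial (Fin 4) ℂ) (hf : f.IsHomogeneous n) :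
    (asaiSubXY f).IsHomogeneous n := by
  have := hf.aeval (S := ℂ) (n := 1) ![X (0 : Fin 2), X 1, X 0, X 1] (by
    intro i; fin_cases i <;> simp [isHomogeneous_X])
  simpa [asaiSubXY] using this

lemma asaiE_eq_monomial (k : ℕ) (d : Fin 4 →₀ ℕ) (h1 : d 0 + d 1 = k) (h2 : d 2 + d 3 = k) :
    monomial d (1 : ℂ) = asaiE k (d 0) (d 2) := by
  rw [monomial_eq, Finsupp.prod_fintype _ _ (by simp)]
  have e1 : k - d 0 = d 1 := by omega
  have e2 : k - d 2 = d 3 := by omega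
  simp [Fin.prod_univ_four, asaiE, e1, e2]

lemma asaiE_support (k a b : ℕ) (ha : a ≤ k) (hb : b ≤ k) :
    ∀ d ∈ (asaiE k a b).support, d 0 + d 1 = k ∧ d 2 + d 3 = k := by
  intro d hd
  have : asaiE k a b = monomial (Finsupp.single 0 a + Finsupp.single 1 (k - a) +
      Finsupp.single 2 b + Finsupp.single 3 (k - b)) 1 := by
    simp [asaiE, X_pow_eq_monomial, monomial_mul]
  rw [this] at hd
  have := Finset.mem_singleton.1 (support_monomial_subset hd)
  subst this
  simp
  omega

lemma asaiE_hom (k a b : ℕ) (ha : a ≤ k) (hb : b ≤ k) : (asaiE k a b).IsHomogeneous (2 * k) := by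
  have := (((isHomogeneous_X_pow (R := ℂ) (0 : Fin 4) a).mul
    (isHomogeneous_X_pow (1 : Fin 4) (k - a))).mul (isHomogeneous_X_pow (2 : Fin 4) b)).mul
    (isHomogeneous_X_pow (3 : Fin 4) (k - b))
  have e : a + (k - a) + b + (k - b) = 2 * k := by omega
  rw [e] at this
  exact this

lemma asai_nabla_calc (k j r i : ℕ) :
    (asaiNabla ^ i) (X 1 ^ k * X 2 ^ j * X 3 ^ r) =
      ((-1 : ℂ) ^ i * (k.descFactorial i : ℂ) * (j.descFactorial i : ℂ)) •
        (X 1 ^ (k - i) * X 2 ^ (j - i) * X 3 ^ r) := by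
  induction i with
  | zero => simp
  | succ i ih =>
    rw [pow_succ', Module.End.mul_apply, ih, map_smul, asai_nabla_apply]
    simp [Derivation.leibniz, pderiv_X, Derivation.leibniz_pow,
      Nat.descFactorial_succ, smul_eq_C_mul, pow_succ, Nat.sub_sub]
    ring

/-- Any `SL₂`-equivariant map `CG⋆ : V_k ⊗ V_k → V_{2k−2j}` (realised on
bihomogeneous polynomials of bidegree `(k,k)` in `(X,Y)` and `(X̄,Ȳ)`, landing in degree
`2k−2j`) normalised as the transpose of the Clebsch–Gordan inclusion — i.e. with
`⟨CG⋆(Y^k X̄^j Ȳ^{k−j}), w^{[0,2k−2j]}⟩ = k!/(k−j)!` — is given by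
`CG⋆(δ) = (−1)^j j! · (1/(j!)²) ∇^j(δ)|_{X̄=X, Ȳ=Y}`.  In particular the two natural
equivariant projections differ by the scalar `(−1)^j j!`. -/
theorem asai_stmt_8 (k j : ℕ) (hj : j ≤ k)
    (CGstar : MvPolynomial (Fin 4) ℂ →ₗ[ℂ] MvPolynomial (Fin 2) ℂ)
    (hdeg : ∀ δ : MvPolynomial (Fin 4) ℂ,
      (∀ d ∈ δ.support, d 0 + d 1 = k ∧ d 2 + d 3 = k) →
      ∀ d ∈ (CGstar δ).support, d 0 + d 1 = 2 * k - 2 * j)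
    (hequiv : ∀ M : Matrix (Fin 2) (Fin 2) ℂ, M.det = 1 →
      ∀ δ : MvPolynomial (Fin 4) ℂ,
        (∀ d ∈ δ.support, d 0 + d 1 = k ∧ d 2 + d 3 = k) →
        CGstar (asaiAct4 M δ) = asaiAct2 M (CGstar δ))
    (hnorm : coeff (Finsupp.single 1 (2 * k - 2 * j))
        (CGstar (X 1 ^ k * X 2 ^ j * X 3 ^ (k - j)))
      = (k.factorial : ℂ) / ((k - j).factorial : ℂ))
    (δ : MvPolynomial (Fin 4) ℂ)
    (hδ : ∀ d ∈ δ.support, d 0 + d 1 = k ∧ d 2 + d 3 = k) :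
    CGstar δ = (((-1 : ℂ) ^ j * (j.factorial : ℂ)) / ((j.factorial : ℂ) ^ 2)) •
      asaiSubXY ((asaiNabla ^ j) δ) := by
  
  set c : ℂ := ((-1 : ℂ) ^ j * (j.factorial : ℂ)) / ((j.factorial : ℂ) ^ 2) with hc
  let L : MvPolynomial (Fin 4) ℂ →ₗ[ℂ] MvPolynomial (Fin 2) ℂ :=
    c • (asaiSubXY.toLinearMap ∘ₗ (asaiNabla ^ j))
  have hL : ∀ f, L f = c • asaiSubXY ((asaiNabla ^ j) f) := fun f => rfl
  have key := asai_unique k j hj (CGstar - L) ?_ ?_ ?_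
  · have hD : (CGstar - L) δ = 0 := by
      rw [δ.as_sum, map_sum]
      refine Finset.sum_eq_zero fun d hd => ?_
      obtain ⟨h1, h2⟩ := hδ d hd
      have : monomial d (coeff d δ) = coeff d δ • monomial d (1 : ℂ) := by
        rw [smul_monomial, smul_eq_mul, mul_one]
      rw [this, map_smul, asaiE_eq_monomial k d h1 h2, key _ _ (by omega) (by omega), smul_zero]
    rw [LinearMap.sub_apply, sub_eq_zero] at hD
    rw [hD, hL]
  · intro a b ha hb d hd
    rw [mem_support_iff, LinearMap.sub_apply, coeff_sub, hL, coeff_smul] at hd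
    by_contra hne
    apply hd
    have z1 : coeff d (CGstar (asaiE k a b)) = 0 := by
      by_contra h
      exact hne (hdeg _ (asaiE_support k a b ha hb) d (mem_support_iff.2 h))
    have z2 : coeff d (asaiSubXY ((asaiNabla ^ j) (asaiE k a b))) = 0 := by
      apply (asai_sub_hom _ _ (asai_nabla_pow_hom _ j _ (asaiE_hom k a b ha hb))).coeff_eq_zero
      rw [Finsupp.degree_eq_sum, Fin.sum_univ_two]
      exact hne
    rw [z1, z2, smul_zero, sub_zero]
  · intro M hM a b ha hb
    rw [LinearMap.sub_apply, LinearMap.sub_apply, hequiv M hM _ (asaiE_support k a b ha hb), hL,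
      hL, asai_nabla_pow_act M hM, asai_sub_act, map_sub, map_smul]
  · have e : asaiE k 0 j = X 1 ^ k * X 2 ^ j * X 3 ^ (k - j) := by simp [asaiE]
    rw [e, LinearMap.sub_apply, coeff_sub, hnorm, hL, asai_nabla_calc, map_smul, coeff_smul,
      coeff_smul]
    have e2 : asaiSubXY (X 1 ^ (k - j) * X 2 ^ (j - j) * X 3 ^ (k - j)) =
        X 1 ^ (2 * k - 2 * j) := by
      have : 2 * k - 2 * j = (k - j) + (k - j) := by omega
      simp [asaiSubXY, this, pow_add]
    rw [e2, coeff_X_pow, if_pos rfl, Nat.descFactorial_self, hc]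
    have f1 : ((k - j).factorial : ℂ) * (k.descFactorial j : ℂ) = k.factorial := by
      exact_mod_cast Nat.factorial_mul_descFactorial hj
    have f2 : ((k - j).factorial : ℂ) ≠ 0 := by exact_mod_cast Nat.factorial_ne_zero _
    have f3 : (j.factorial : ℂ) ≠ 0 := by exact_mod_cast Nat.factorial_ne_zero _
    have f4 : ((-1 : ℂ) ^ j) * (-1) ^ j = 1 := by rw [← mul_pow]; simp
    rw [← f1]
    simp only [smul_eq_mul, mul_one]
    field_simp
    linear_combination -(k.descFactorial j : ℂ) * f4
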